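/- Let A and U be nonempty sets with the discrete topology, let X ⊆ A^ℤ be a bilaterally-finite shift space, let Y ⊆ U^ℤ be a shift space, and let Ψ : X → Y be a bijective extended sliding block code of finite degree. Then the inverse map Ψ⁻¹ : Y → X is continuous and shift-commuting (Ψ⁻¹ ∘ σ = σ ∘ Ψ⁻¹); that is, Ψ is reversible and Ψ⁻¹ is itself an extended sliding block code. -/

import Mathlib

open Filter Topology Set

namespace ShiftPaper

/-- The shift map `σ` on the full shift `A^ℤ`: `σ(x)_n = x_{n+1}`. -/
def shiftMap {A : Type*} (x : ℤ → A) : ℤ → A := fun n => x (n + 1)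

/-- The `n`-th iterate of the shift: `σ^n(x)_m = x_{m+n}` (for `n : ℤ`). -/
def shiftIter {A : Type*} (n : ℤ) (x : ℤ → A) : ℤ → A := fun m => x (m + n)

/-- A shift space: a nonempty closed shift-invariant subset of the full shift. -/
def IsShiftSpace {A : Type*} [TopologicalSpace A] (X : Set (ℤ → A)) : Prop :=
  X.Nonempty ∧ IsClosed X ∧ shiftMap '' X = X

/-- The cylinder in `X` determined by the finite set `s ⊆ ℤ` and the values of `h` on `s`:
`C_X(h) = X ∩ {x : x_i = h_i for all i ∈ s}`. -/
def cylX {A : Type*} (X : Set (ℤ → A)) (s : Finset ℤ) (h : ℤ → A) : Set (ℤ → A) :=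
  X ∩ {x | ∀ i ∈ s, x i = h i}

/-- A barrier on `X`: a partition of `X` all of whose members are nonempty cylinders in `X`. -/
def IsBarrier {A : Type*} (X : Set (ℤ → A)) (B : Set (Set (ℤ → A))) : Prop :=
  (∀ C ∈ B, C.Nonempty ∧ ∃ (s : Finset ℤ) (h : ℤ → A), C = cylX X s h) ∧
  (∀ x ∈ X, ∃! C, C ∈ B ∧ x ∈ C)

/-- `Ψ` is induced by the local rule `φ` on the barrier `B`:
`Ψ(x)_n = φ(C)` whenever `C ∈ B` contains `σ^n(x)`. -/
def InducedBy {A U : Type*} (X : Set (ℤ → A)) (Ψ : (ℤ → A) → ℤ → U)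
    (B : Set (Set (ℤ → A))) (φ : Set (ℤ → A) → U) : Prop :=
  ∀ x ∈ X, ∀ n : ℤ, ∀ C ∈ B, shiftIter n x ∈ C → Ψ x n = φ C

/-- `Ψ` is an extended sliding block code on `X`. -/
def IsESBC {A U : Type*} (X : Set (ℤ → A)) (Ψ : (ℤ → A) → ℤ → U) : Prop :=
  ∃ (B : Set (Set (ℤ → A))) (φ : Set (ℤ → A) → U), IsBarrier X B ∧ InducedBy X Ψ B φ

/-- `Ψ` is an extended sliding block code of finite degree: it is induced by a local rule `φ`
on a barrier `B` (so `B` is attached to `Ψ`) such that for each symbol `u` only finitely many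
members of `B` have `φ`-value (i.e. `Ψ₀`-value) `u`. -/
def IsFiniteDegreeESBC {A U : Type*} (X : Set (ℤ → A)) (Ψ : (ℤ → A) → ℤ → U) : Prop :=
  ∃ (B : Set (Set (ℤ → A))) (φ : Set (ℤ → A) → U), IsBarrier X B ∧ InducedBy X Ψ B φ ∧
    ∀ u : U, {C | C ∈ B ∧ φ C = u}.Finite

/-- The data produced by the crucial lemma for a distinguished sequence `x` with
`Ψ(x^k) → y`: a sequence of partial functions `h_ℓ` (with finite domains `s_ℓ`, each
extending the previous one) and a decreasing sequence `S_ℓ` of infinite subsets of `ℕ`,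
such that `x^k ∈ C_X(h_ℓ)` for `k ∈ S_ℓ` and `Ψ(z)|_{[-ℓ,ℓ]} = y|_{[-ℓ,ℓ]}` on `C_X(h_ℓ)`. -/
def AssocData {A U : Type*} (X : Set (ℤ → A)) (Ψ : (ℤ → A) → ℤ → U)
    (x : ℕ → ℤ → A) (y : ℤ → U)
    (s : ℕ → Finset ℤ) (h : ℕ → ℤ → A) (S : ℕ → Set ℕ) : Prop :=
  (∀ ℓ : ℕ, s ℓ ⊆ s (ℓ + 1)) ∧
  (∀ ℓ : ℕ, ∀ i ∈ s ℓ, h (ℓ + 1) i = h ℓ i) ∧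
  (∀ ℓ : ℕ, (S ℓ).Infinite) ∧
  (∀ ℓ : ℕ, S (ℓ + 1) ⊆ S ℓ) ∧
  (∀ ℓ : ℕ, ∀ k ∈ S ℓ, x k ∈ cylX X (s ℓ) (h ℓ)) ∧
  (∀ ℓ : ℕ, ∀ z ∈ cylX X (s ℓ) (h ℓ), ∀ j : ℤ, |j| ≤ (ℓ : ℤ) → Ψ z j = y j)

/-- The symbol `a` belongs to `L₁(X)`: it appears in some point of `X`. -/
def inLetter {A : Type*} (X : Set (ℤ → A)) (a : A) : Prop :=
  ∃ x ∈ X, ∃ i : ℤ, x i = a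

/-- The two-letter word `ab` belongs to the language `L(X)`. -/
def inLang2 {A : Type*} (X : Set (ℤ → A)) (a b : A) : Prop :=
  ∃ x ∈ X, ∃ i : ℤ, x i = a ∧ x (i + 1) = b

/-- `X` is right-finite: for each allowed symbol `a`, only finitely many `b` with `ab ∈ L(X)`. -/
def RightFinite {A : Type*} (X : Set (ℤ → A)) : Prop :=
  ∀ a : A, inLetter X a → {b : A | inLang2 X a b}.Finite

/-- `X` is left-finite: for each allowed symbol `a`, only finitely many `b` with `ba ∈ L(X)`. -/
def LeftFinite {A : Type*} (X : Set (ℤ → A)) : Prop :=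
  ∀ a : A, inLetter X a → {b : A | inLang2 X b a}.Finite

end ShiftPaper

open ShiftPaper

/-!
`Ψ₀` sends each member of a barrier to one symbol, so by finite degree each fibre of `Ψ₀ : X → U`
is a finite union of cylinders. Bilateral finiteness makes a cylinder compact as soon as it fixes
one coordinate; if a barrier member fixes none, the barrier is `{X}`, `Ψ` is constant, and
injectivity leaves `X` with a single point. So `Ψ₀`, a continuous map to a discrete space with
compact fibres, is proper. Since `Ψ₀` factors through `Ψ`, the map `Ψ` is proper too, hence a closed
embedding, and its inverse is continuous. A continuous shift-commuting map on `Y` is an ESBC because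
each `y ∈ Y` has a least central window determining the value at `0`, and the corresponding
cylinders partition `Y`.
-/

namespace ShiftPaper

variable {A U : Type*} {X : Set (ℤ → A)}

section Shift

theorem shiftIter_shiftIter (m n : ℤ) (x : ℤ → A) :
    shiftIter m (shiftIter n x) = shiftIter (m + n) x :=
  funext fun k => congrArg x (add_assoc k m n)

@[simp]
theorem shiftIter_zero (x : ℤ → A) : shiftIter 0 x = x :=
  funext fun k => congrArg x (add_zero k)

theorem continuous_shiftIter [TopologicalSpace A] (n : ℤ) :
    Continuous (shiftIter n : (ℤ → A) → ℤ → A) :=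
  continuous_pi fun m => continuous_apply (m + n)

theorem mapsTo_shiftIter (hshift : shiftMap '' X = X) (n : ℤ) : MapsTo (shiftIter n) X X := by
  have forward : MapsTo (shiftIter 1) X X := mapsTo_iff_image_subset.2 hshift.subset
  have backward : MapsTo (shiftIter (-1)) X X := fun x hx => by
    obtain ⟨w, hw, rfl⟩ := hshift.superset hx
    rwa [show shiftMap w = shiftIter 1 w from rfl, shiftIter_shiftIter, neg_add_cancel,
      shiftIter_zero]
  induction n using Int.induction_on with
  | zero => exact fun x hx => by rwa [shiftIter_zero]
  | succ i ih =>
    intro x hx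
    rw [add_comm, ← shiftIter_shiftIter]
    exact forward (ih hx)
  | pred i ih =>
    intro x hx
    rw [sub_eq_neg_add, ← shiftIter_shiftIter]
    exact backward (ih hx)

end Shift

section Cylinder

variable {s t : Finset ℤ} {h x : ℤ → A}

@[simp]
theorem cylX_empty (X : Set (ℤ → A)) (h : ℤ → A) : cylX X ∅ h = X := by
  simp [cylX]

theorem mem_cylX_self (s : Finset ℤ) (hx : x ∈ X) : x ∈ cylX X s x :=
  ⟨hx, fun _ _ => rfl⟩

theorem cylX_anti (hst : s ⊆ t) : cylX X t h ⊆ cylX X s h :=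
  fun _ hx => ⟨hx.1, fun i hi => hx.2 i (hst hi)⟩

theorem cylX_eq_of_mem (hx : x ∈ cylX X s h) : cylX X s x = cylX X s h := by
  ext z
  exact and_congr_right fun _ => forall₂_congr fun i hi => by rw [hx.2 i hi]

theorem isClosed_cylX [TopologicalSpace A] [T1Space A] (hX : IsClosed X) :
    IsClosed (cylX X s h) :=
  hX.inter (isClosed_set_pi fun _ _ => isClosed_singleton)

theorem cylX_mem_nhdsWithin [TopologicalSpace A] [DiscreteTopology A] (hx : x ∈ cylX X s h) :
    cylX X s h ∈ 𝓝[X] x :=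
  inter_mem_nhdsWithin X <|
    (isOpen_set_pi s.finite_toSet fun i _ => isOpen_discrete {h i}).mem_nhds hx.2

end Cylinder

section BilaterallyFinite

variable {S : Set (ℤ → A)} {i : ℤ}

theorem RightFinite.finite_image_eval_add_one (hr : RightFinite X) (hS : S ⊆ X)
    (hfin : (Function.eval i '' S).Finite) : (Function.eval (i + 1) '' S).Finite := by
  have successors_finite : ∀ a ∈ Function.eval i '' S, {b | inLang2 X a b}.Finite := by
    rintro _ ⟨x, hx, rfl⟩
    exact hr _ ⟨x, hS hx, i, rfl⟩
  refine (hfin.biUnion successors_finite).subset ?_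
  rintro _ ⟨x, hx, rfl⟩
  exact mem_biUnion (mem_image_of_mem _ hx) ⟨x, hS hx, i, rfl, rfl⟩

theorem LeftFinite.finite_image_eval_sub_one (hl : LeftFinite X) (hS : S ⊆ X)
    (hfin : (Function.eval i '' S).Finite) : (Function.eval (i - 1) '' S).Finite := by
  have predecessors_finite : ∀ a ∈ Function.eval i '' S, {b | inLang2 X b a}.Finite := by
    rintro _ ⟨x, hx, rfl⟩
    exact hl _ ⟨x, hS hx, i, rfl⟩
  refine (hfin.biUnion predecessors_finite).subset ?_
  rintro _ ⟨x, hx, rfl⟩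
  exact mem_biUnion (mem_image_of_mem _ hx)
    ⟨x, hS hx, i - 1, rfl, congrArg x (sub_add_cancel i 1)⟩

theorem finite_image_eval_of_bilaterally_finite (hr : RightFinite X) (hl : LeftFinite X)
    (hS : S ⊆ X) (hfin : (Function.eval i '' S).Finite) (j : ℤ) :
    (Function.eval j '' S).Finite := by
  induction j using Int.inductionOn' (b := i) with
  | zero => exact hfin
  | succ _ _ ih => exact hr.finite_image_eval_add_one hS ih
  | pred _ _ ih => exact hl.finite_image_eval_sub_one hS ih

theorem isCompact_cylX [TopologicalSpace A] [T1Space A] (hX : IsClosed X)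
    (hr : RightFinite X) (hl : LeftFinite X) {s : Finset ℤ} (hs : s.Nonempty) (h : ℤ → A) :
    IsCompact (cylX X s h) := by
  obtain ⟨i, hi⟩ := hs
  have finite_at_i : (Function.eval i '' cylX X s h).Finite :=
    (finite_singleton (h i)).subset (image_subset_iff.2 fun x hx => hx.2 i hi)
  have finite_at (j : ℤ) : (Function.eval j '' cylX X s h).Finite :=
    finite_image_eval_of_bilaterally_finite hr hl inter_subset_left finite_at_i j
  exact (Pi.isCompact_iff_of_isClosed (isClosed_cylX hX)).2 fun j => (finite_at j).isCompact

end BilaterallyFinite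

namespace InducedBy

variable {Ψ : (ℤ → A) → ℤ → U} {B : Set (Set (ℤ → A))} {φ : Set (ℤ → A) → U}
  {C : Set (ℤ → A)}

theorem map_shiftIter (hΨ : InducedBy X Ψ B φ) (hB : IsBarrier X B) (hshift : shiftMap '' X = X)
    (n : ℤ) {x : ℤ → A} (hx : x ∈ X) : Ψ (shiftIter n x) = shiftIter n (Ψ x) := by
  funext m
  obtain ⟨C, ⟨hC, hxC⟩, -⟩ := hB.2 _ (mapsTo_shiftIter hshift (m + n) hx)
  calc Ψ (shiftIter n x) m = φ C :=
        hΨ _ (mapsTo_shiftIter hshift n hx) m C hC (by rwa [shiftIter_shiftIter])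
    _ = Ψ x (m + n) := (hΨ x hx (m + n) C hC hxC).symm

theorem continuousOn [TopologicalSpace A] [DiscreteTopology A] [TopologicalSpace U]
    (hΨ : InducedBy X Ψ B φ) (hB : IsBarrier X B) (hshift : shiftMap '' X = X) :
    ContinuousOn Ψ X := by
  refine continuousOn_pi.2 fun n x hx => ?_
  obtain ⟨C, ⟨hC, hxC⟩, -⟩ := hB.2 _ (mapsTo_shiftIter hshift n hx)
  obtain ⟨s, h, rfl⟩ := (hB.1 C hC).2
  have eventually_mem : ∀ᶠ z in 𝓝[X] x, shiftIter n z ∈ cylX X s h :=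
    (continuous_shiftIter n).continuousWithinAt.tendsto_nhdsWithin (mapsTo_shiftIter hshift n)
      (cylX_mem_nhdsWithin hxC)
  have eventually_eq : ∀ᶠ z in 𝓝[X] x, Ψ z n = Ψ x n := by
    filter_upwards [eventually_mem, self_mem_nhdsWithin] with z hzC hz
    rw [hΨ z hz n _ hC hzC, hΨ x hx n _ hC hxC]
  exact tendsto_const_nhds.congr' (eventually_eq.mono fun _ => Eq.symm)

theorem setOf_apply_zero_eq_sUnion (hΨ : InducedBy X Ψ B φ) (hB : IsBarrier X B) (u : U) :
    {x ∈ X | Ψ x 0 = u} = ⋃₀ {C | C ∈ B ∧ φ C = u} := by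
  have apply_zero {x C} (hx : x ∈ X) (hC : C ∈ B) (hxC : x ∈ C) : Ψ x 0 = φ C :=
    hΨ x hx 0 C hC (by rwa [shiftIter_zero])
  ext x
  constructor
  · rintro ⟨hx, rfl⟩
    obtain ⟨C, ⟨hC, hxC⟩, -⟩ := hB.2 x hx
    exact ⟨C, ⟨hC, (apply_zero hx hC hxC).symm⟩, hxC⟩
  · rintro ⟨C, ⟨hC, rfl⟩, hxC⟩
    obtain ⟨s, h, rfl⟩ := (hB.1 C hC).2
    exact ⟨hxC.1, apply_zero hxC.1 hC hxC⟩

theorem subsingleton_of_self_mem (hΨ : InducedBy X Ψ B φ) (hshift : shiftMap '' X = X)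
    (hinj : InjOn Ψ X) (hXB : X ∈ B) : X.Subsingleton := by
  have apply_eq {x} (hx : x ∈ X) (n : ℤ) : Ψ x n = φ X :=
    hΨ x hx n X hXB (mapsTo_shiftIter hshift n hx)
  exact fun x hx z hz => hinj hx hz (funext fun n => (apply_eq hx n).trans (apply_eq hz n).symm)

theorem isCompact_of_mem [TopologicalSpace A] [T1Space A] (hΨ : InducedBy X Ψ B φ)
    (hB : IsBarrier X B) (hX : IsClosed X) (hshift : shiftMap '' X = X) (hr : RightFinite X)
    (hl : LeftFinite X) (hinj : InjOn Ψ X) (hC : C ∈ B) : IsCompact C := by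
  obtain ⟨s, h, rfl⟩ := (hB.1 C hC).2
  obtain rfl | hs := s.eq_empty_or_nonempty
  · rw [cylX_empty] at hC ⊢
    exact (hΨ.subsingleton_of_self_mem hshift hinj hC).isCompact
  · exact isCompact_cylX hX hr hl hs h

end InducedBy

section ClosedEmbedding

theorem isProperMap_of_isCompact_fibers {α β : Type*} [TopologicalSpace α]
    [TopologicalSpace β] [DiscreteTopology β] {f : α → β} (hf : Continuous f)
    (hcpt : ∀ b, IsCompact (f ⁻¹' {b})) : IsProperMap f :=
  isProperMap_iff_isClosedMap_and_compact_fibers.2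
    ⟨hf, fun _ _ => isClosed_discrete _, fun {b} => hcpt b⟩

theorem IsFiniteDegreeESBC.isClosedEmbedding_domRestrict [TopologicalSpace A] [DiscreteTopology A]
    [TopologicalSpace U] [DiscreteTopology U] {Ψ : (ℤ → A) → ℤ → U}
    (hΨ : IsFiniteDegreeESBC X Ψ) (hX : IsClosed X) (hshift : shiftMap '' X = X)
    (hr : RightFinite X) (hl : LeftFinite X) (hinj : InjOn Ψ X) :
    IsClosedEmbedding (X.domRestrict Ψ) := by
  obtain ⟨B, φ, hB, hind, hfin⟩ := hΨ
  have continuous_domRestrict : Continuous (X.domRestrict Ψ) :=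
    (hind.continuousOn hB hshift).domRestrict
  have isCompact_fiber (u : U) : IsCompact {x ∈ X | Ψ x 0 = u} := by
    rw [hind.setOf_apply_zero_eq_sUnion hB]
    exact (hfin u).isCompact_sUnion fun C hC =>
      hind.isCompact_of_mem hB hX hshift hr hl hinj hC.1
  have isProperMap_apply_zero : IsProperMap (Function.eval 0 ∘ X.domRestrict Ψ) :=
    isProperMap_of_isCompact_fibers ((continuous_apply 0).comp continuous_domRestrict)
      fun u => Subtype.isCompact_iff.2 <| by
        convert isCompact_fiber u
        exact Subtype.image_preimage_coe X {x | Ψ x 0 = u}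
  exact .of_continuous_injective_isClosedMap continuous_domRestrict hinj.injective
    (isProperMap_of_comp_of_t2 continuous_domRestrict (continuous_apply 0)
      isProperMap_apply_zero).isClosedMap

theorem continuousOn_invFunOn_of_isInducing_domRestrict {α β : Type*} [Nonempty α]
    [TopologicalSpace α] [TopologicalSpace β] {f : α → β} {s : Set α}
    (hf : IsInducing (s.domRestrict f)) : ContinuousOn (Function.invFunOn f s) (f '' s) := by
  have mapsTo_inv : MapsTo (Function.invFunOn f s) (f '' s) s :=
    (surjOn_image f s).mapsTo_invFunOn
  have continuous_inv : Continuous mapsTo_inv.restrict :=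
    hf.continuous_iff.2 <| continuous_subtype_val.congr fun b =>
      ((surjOn_image f s).rightInvOn_invFunOn b.2).symm
  exact continuousOn_iff_continuous_domRestrict.2 (continuous_subtype_val.comp continuous_inv)

end ClosedEmbedding

section Window

variable {α : Type*} {Y : Set (ℤ → U)} {f : (ℤ → U) → α} {y z : ℤ → U}

/-- The central window `[-N, N] ⊆ ℤ`. -/
noncomputable def window (N : ℕ) : Finset ℤ :=
  Finset.Icc (-N) N

theorem window_mono : Monotone window :=
  fun _ _ h => Finset.Icc_subset_Icc (by omega) (by omega)

theorem exists_subset_window (s : Finset ℤ) : ∃ N, s ⊆ window N := by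
  refine ⟨s.sup Int.natAbs, fun i hi => ?_⟩
  have natAbs_le : i.natAbs ≤ s.sup Int.natAbs := Finset.le_sup hi
  exact Finset.mem_Icc.2 (by omega)

theorem exists_cylX_window_subset [TopologicalSpace U] {t : Set (ℤ → U)} (ht : t ∈ 𝓝[Y] y) :
    ∃ N, cylX Y (window N) y ⊆ t := by
  obtain ⟨v, hv, hvt⟩ := mem_nhdsWithin_iff_exists_mem_nhds_inter.1 ht
  rw [nhds_pi] at hv
  obtain ⟨s, w, hw, hwv⟩ := Filter.mem_pi'.1 hv
  obtain ⟨N, hN⟩ := exists_subset_window s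
  refine ⟨N, fun z hz => hvt ⟨hwv fun i hi => ?_, hz.1⟩⟩
  rw [hz.2 i (hN hi)]
  exact mem_of_mem_nhds (hw i)

/-- The least `N` for which the coordinates of `y` in `[-N, N]` determine the value of `f` on `Y`;
it is the junk value `0` if no such `N` exists. -/
noncomputable def codingRadius (Y : Set (ℤ → U)) (f : (ℤ → U) → α) (y : ℤ → U) : ℕ :=
  sInf {N | ∀ z ∈ cylX Y (window N) y, f z = f y}

/-- The largest cylinder in `Y` around `y`, over a central window, on which `f` is constant.
These are the members of the barrier attached to `f`. -/
noncomputable def codingCylinder (Y : Set (ℤ → U)) (f : (ℤ → U) → α) (y : ℤ → U) : Set (ℤ → U) :=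
  cylX Y (window (codingRadius Y f y)) y

theorem apply_eq_of_mem_codingCylinder [TopologicalSpace U] [TopologicalSpace α]
    [DiscreteTopology α] (hf : ContinuousOn f Y) (hy : y ∈ Y) (hz : z ∈ codingCylinder Y f y) :
    f z = f y := by
  have locally_constant : {z | f z = f y} ∈ 𝓝[Y] y :=
    hf y hy ((isOpen_discrete {f y}).mem_nhds rfl)
  exact Nat.sInf_mem (s := {N | ∀ z ∈ cylX Y (window N) y, f z = f y})
    (exists_cylX_window_subset locally_constant) z hz

theorem codingRadius_eq_of_mem_codingCylinder [TopologicalSpace U] [TopologicalSpace α]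
    [DiscreteTopology α] (hf : ContinuousOn f Y) (hy : y ∈ Y) (hz : z ∈ codingCylinder Y f y) :
    codingRadius Y f z = codingRadius Y f y := by
  have determines_iff {N : ℕ} (hN : N ≤ codingRadius Y f y) :
      (∀ w ∈ cylX Y (window N) z, f w = f z) ↔ ∀ w ∈ cylX Y (window N) y, f w = f y := by
    rw [cylX_eq_of_mem (cylX_anti (window_mono hN) hz), apply_eq_of_mem_codingCylinder hf hy hz]
  have radius_le : codingRadius Y f z ≤ codingRadius Y f y :=
    Nat.sInf_le ((determines_iff le_rfl).2 fun _ => apply_eq_of_mem_codingCylinder hf hy)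
  exact radius_le.antisymm <|
    Nat.sInf_le ((determines_iff radius_le).1 fun _ => apply_eq_of_mem_codingCylinder hf hz.1)

theorem codingCylinder_eq_of_mem [TopologicalSpace U] [TopologicalSpace α] [DiscreteTopology α]
    (hf : ContinuousOn f Y) (hy : y ∈ Y) (hz : z ∈ codingCylinder Y f y) :
    codingCylinder Y f z = codingCylinder Y f y := by
  rw [codingCylinder, codingRadius_eq_of_mem_codingCylinder hf hy hz, cylX_eq_of_mem hz,
    codingCylinder]

theorem isBarrier_image_codingCylinder [TopologicalSpace U] [TopologicalSpace α]
    [DiscreteTopology α] (hf : ContinuousOn f Y) : IsBarrier Y (codingCylinder Y f '' Y) := by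
  refine ⟨?_, fun y hy => ⟨_, ⟨mem_image_of_mem _ hy, mem_cylX_self _ hy⟩, ?_⟩⟩
  · rintro _ ⟨y, hy, rfl⟩
    exact ⟨⟨y, mem_cylX_self _ hy⟩, _, _, rfl⟩
  · rintro _ ⟨⟨w, hw, rfl⟩, hyw⟩
    exact (codingCylinder_eq_of_mem hf hw hyw).symm

theorem isESBC_of_continuousOn [TopologicalSpace U] [TopologicalSpace A] [DiscreteTopology A]
    [Nonempty A] {Φ : (ℤ → U) → ℤ → A} (hΦ : ContinuousOn Φ Y)
    (hcomm : ∀ n, ∀ y ∈ Y, Φ (shiftIter n y) = shiftIter n (Φ y)) : IsESBC Y Φ := by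
  have continuousOn_apply_zero : ContinuousOn (fun y => Φ y 0) Y := continuousOn_pi.1 hΦ 0
  have constant_on_members : ∀ C ∈ codingCylinder Y (fun y => Φ y 0) '' Y,
      ∃ a, ∀ z ∈ C, Φ z 0 = a := by
    rintro _ ⟨y, hy, rfl⟩
    exact ⟨Φ y 0, fun z hz => apply_eq_of_mem_codingCylinder continuousOn_apply_zero hy hz⟩
  choose! φ hφ using constant_on_members
  refine ⟨_, φ, isBarrier_image_codingCylinder continuousOn_apply_zero, fun y hy n C hC hyC => ?_⟩
  calc Φ y n = Φ (shiftIter n y) 0 := by rw [hcomm n y hy, shiftIter, zero_add]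
    _ = φ C := hφ C hC _ hyC

end Window

end ShiftPaper

/-- a bijective finite degree ESBC `Ψ : X → Y` on a bilaterally-finite
shift space `X` is reversible: its inverse is continuous and shift-commuting, i.e. it is
itself an ESBC. -/
theorem reversible_of_bilaterally_finite
    {A U : Type*} [TopologicalSpace A] [DiscreteTopology A] [Nonempty A]
    [TopologicalSpace U] [DiscreteTopology U] [Nonempty U]
    (X : Set (ℤ → A)) (hX : IsShiftSpace X)
    (hbf : RightFinite X ∧ LeftFinite X)
    (Y : Set (ℤ → U)) (hY : IsShiftSpace Y)
    (Ψ : (ℤ → A) → ℤ → U) (hΨ : IsFiniteDegreeESBC X Ψ)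
    (hinj : Set.InjOn Ψ X) (hsurj : Ψ '' X = Y) :
    ∃ Φ : (ℤ → U) → ℤ → A,
      (∀ x ∈ X, Φ (Ψ x) = x) ∧
      (∀ y ∈ Y, Φ y ∈ X ∧ Ψ (Φ y) = y) ∧
      ContinuousOn Φ Y ∧
      (∀ y ∈ Y, Φ (shiftMap y) = shiftMap (Φ y)) ∧
      IsESBC Y Φ := by
  let Φ := Function.invFunOn Ψ X
  have leftInvOn : LeftInvOn Φ Ψ X := hinj.leftInvOn_invFunOn
  have surjOn : SurjOn Ψ X Y := hsurj.superset
  have rightInvOn : RightInvOn Φ Ψ Y := surjOn.rightInvOn_invFunOn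
  have mapsTo : MapsTo Φ Y X := surjOn.mapsTo_invFunOn
  have continuousOn : ContinuousOn Φ Y :=
    hsurj ▸ continuousOn_invFunOn_of_isInducing_domRestrict
      (hΨ.isClosedEmbedding_domRestrict hX.2.1 hX.2.2 hbf.1 hbf.2 hinj).isInducing
  have map_shiftIter : ∀ n, ∀ y ∈ Y, Φ (shiftIter n y) = shiftIter n (Φ y) := by
    intro n y hy
    obtain ⟨B, φ, hB, hind, -⟩ := hΨ
    calc Φ (shiftIter n y) = Φ (Ψ (shiftIter n (Φ y))) := by
          rw [hind.map_shiftIter hB hX.2.2 n (mapsTo hy), rightInvOn hy]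
      _ = shiftIter n (Φ y) := leftInvOn (mapsTo_shiftIter hX.2.2 n (mapsTo hy))
  exact ⟨Φ, leftInvOn, fun y hy => ⟨mapsTo hy, rightInvOn hy⟩, continuousOn, map_shiftIter 1,
    isESBC_of_continuousOn continuousOn map_shiftIter⟩
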